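/- The complex vector space of tuples (y₀, y₁, y₂, y₃, y₄) ∈ ℂ⁵ such that y₀·Tr(x³) + y₁·Tr(x²·xᵀ) + y₂·Tr(x²)·Tr(x) + y₃·Tr(x·xᵀ)·Tr(x) + y₄·Tr(x)³ = 0 holds for every 2×2 complex matrix x has dimension 2. -/

import Mathlib

open Matrix

/-- The subspace of tuples `(y₀, y₁, y₂, y₃, y₄) ∈ ℂ⁵` such that
`y₀·Tr(x³) + y₁·Tr(x²·xᵀ) + y₂·Tr(x²)·Tr(x) + y₃·Tr(x·xᵀ)·Tr(x) + y₄·Tr(x)³ = 0`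
for every 2×2 complex matrix `x`. -/
noncomputable def relSpace : Submodule ℂ (Fin 5 → ℂ) where
  carrier := {y | ∀ x : Matrix (Fin 2) (Fin 2) ℂ,
    y 0 * (x * x * x).trace + y 1 * (x * x * xᵀ).trace + y 2 * ((x * x).trace * x.trace)
      + y 3 * ((x * xᵀ).trace * x.trace) + y 4 * x.trace ^ 3 = 0}
  add_mem' := by
    intro a b ha hb x
    simp only [Pi.add_apply]
    linear_combination ha x + hb x
  zero_mem' := by
    intro x
    simp
  smul_mem' := by
    intro c y hy x
    simp only [Pi.smul_apply, smul_eq_mul]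
    linear_combination c * hy x

/-! By Cayley–Hamilton `x² = Tr(x) x - det(x)`, so `Tr(x² m) = Tr(x) Tr(x m) - det(x) Tr(m)` for
every `m`. Taking `m = x`, `xᵀ`, `1` and eliminating the determinant from the three identities gives
two relations with integer coefficients. Evaluating at three integer matrices shows that, over any
commutative ring, every relation is a combination of these two, with its coordinates `y₀` and `y₄`
as the coefficients. -/

section CubicTraces

variable {R : Type*} [CommRing R]

theorem mul_self_fin_two (x : Matrix (Fin 2) (Fin 2) R) :
    x * x = x.trace • x - x.det • (1 : Matrix (Fin 2) (Fin 2) R) := by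
  nontriviality R
  have cayley_hamilton : x ^ 2 - x.trace • x + x.det • (1 : Matrix (Fin 2) (Fin 2) R) = 0 := by
    simpa [charpoly_fin_two, Algebra.algebraMap_eq_smul_one] using x.aeval_self_charpoly
  rw [← pow_two, ← sub_eq_zero, ← cayley_hamilton]
  abel

theorem trace_mul_self_mul_fin_two (x m : Matrix (Fin 2) (Fin 2) R) :
    (x * x * m).trace = x.trace * (x * m).trace - x.det * m.trace := by
  simp [mul_self_fin_two, sub_mul]

theorem trace_mul_self_fin_two (x : Matrix (Fin 2) (Fin 2) R) :
    (x * x).trace = x.trace ^ 2 - 2 * x.det := by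
  have h := trace_mul_self_mul_fin_two x 1
  simp only [mul_one, trace_one, Fintype.card_fin, Nat.cast_ofNat] at h
  linear_combination h

/-- The values at `x` of the five spanning cubic `O₂`-invariants, in the order in which `relSpace`
pairs them with coefficients. -/
def cubicTraces (x : Matrix (Fin 2) (Fin 2) R) : Fin 5 → R :=
  ![(x * x * x).trace, (x * x * xᵀ).trace, (x * x).trace * x.trace, (x * xᵀ).trace * x.trace,
    x.trace ^ 3]

theorem cubicTraces_dotProduct (x : Matrix (Fin 2) (Fin 2) R) (y : Fin 5 → R) :
    cubicTraces x ⬝ᵥ y =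
      y 0 * (x * x * x).trace + y 1 * (x * x * xᵀ).trace + y 2 * ((x * x).trace * x.trace)
        + y 3 * ((x * xᵀ).trace * x.trace) + y 4 * x.trace ^ 3 := by
  simp [cubicTraces, dotProduct, Fin.sum_univ_five, mul_comm]

theorem cubicTraces_coordinate_projection :
    cubicTraces (!![1, 0; 0, 0] : Matrix (Fin 2) (Fin 2) R) = ![1, 1, 1, 1, 1] := by
  simp [cubicTraces, trace_fin_two, vecMul_transpose]

theorem cubicTraces_oblique_projection :
    cubicTraces (!![1, 1; 0, 0] : Matrix (Fin 2) (Fin 2) R) = ![1, 2, 1, 2, 1] := by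
  norm_num [cubicTraces, trace_fin_two, vecMul_transpose]

theorem cubicTraces_fibonacci :
    cubicTraces (!![0, 1; 1, 1] : Matrix (Fin 2) (Fin 2) R) = ![4, 4, 3, 3, 1] := by
  norm_num [cubicTraces, trace_fin_two, vecMul_transpose]

variable (R) in
/-- The module of linear relations satisfied by `cubicTraces` at all matrices over `R`; this is
`relSpace` over an arbitrary commutative ring. -/
def cubicTraceRelations : Submodule R (Fin 5 → R) :=
  ⨅ x : Matrix (Fin 2) (Fin 2) R, LinearMap.ker (dotProductBilin R R (cubicTraces x))

theorem mem_cubicTraceRelations {y : Fin 5 → R} :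
    y ∈ cubicTraceRelations R ↔ ∀ x : Matrix (Fin 2) (Fin 2) R, cubicTraces x ⬝ᵥ y = 0 := by
  simp [cubicTraceRelations]

variable (R) in
/-- The two basic relations. The first says that the Cayley–Hamilton expressions for `Tr(x³)` and
`Tr(x² xᵀ)` have the same determinant term `det(x) Tr(x)`; the second eliminates that term from the
latter by `2 det(x) = Tr(x)² - Tr(x²)`. -/
def basicRelations : Fin 2 → Fin 5 → R :=
  ![![1, -1, -1, 1, 0], ![0, 2, -1, -2, 1]]

theorem basicRelations_mem (i : Fin 2) : basicRelations R i ∈ cubicTraceRelations R := by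
  refine mem_cubicTraceRelations.2 fun x => ?_
  rw [cubicTraces_dotProduct]
  have trace_cube := trace_mul_self_mul_fin_two x x
  have trace_sq_transpose := trace_mul_self_mul_fin_two x xᵀ
  have trace_sq := trace_mul_self_fin_two x
  rw [trace_transpose] at trace_sq_transpose
  match i with
  | 0 =>
    simp only [basicRelations, cons_val]
    linear_combination trace_cube - trace_sq_transpose
  | 1 =>
    simp only [basicRelations, cons_val]
    linear_combination 2 * trace_sq_transpose - x.trace * trace_sq

theorem eq_smul_basicRelations {y : Fin 5 → R} (hy : y ∈ cubicTraceRelations R) :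
    y = y 0 • basicRelations R 0 + y 4 • basicRelations R 1 := by
  rw [mem_cubicTraceRelations] at hy
  have at_coordinate_projection : y 0 + y 1 + y 2 + y 3 + y 4 = 0 := by
    simpa [cubicTraces_coordinate_projection, dotProduct, Fin.sum_univ_five] using
      hy !![1, 0; 0, 0]
  have at_oblique_projection : y 0 + 2 * y 1 + y 2 + 2 * y 3 + y 4 = 0 := by
    simpa [cubicTraces_oblique_projection, dotProduct, Fin.sum_univ_five] using
      hy !![1, 1; 0, 0]
  have at_fibonacci : 4 * y 0 + 4 * y 1 + 3 * y 2 + 3 * y 3 + y 4 = 0 := by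
    simpa [cubicTraces_fibonacci, dotProduct, Fin.sum_univ_five] using hy !![0, 1; 1, 1]
  have coeff_one : y 1 = -y 0 + y 4 * 2 := by
    linear_combination at_fibonacci - 3 * at_coordinate_projection
  have coeff_two : y 2 = -y 0 - y 4 := by
    linear_combination 2 * at_coordinate_projection - at_oblique_projection
  have coeff_three : y 3 = y 0 - y 4 * 2 := by
    linear_combination 2 * at_coordinate_projection + at_oblique_projection - at_fibonacci
  ext i
  fin_cases i <;> simp [basicRelations, coeff_one, coeff_two, coeff_three, sub_eq_add_neg]

theorem linearIndependent_basicRelations : LinearIndependent R (basicRelations R) := by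
  refine LinearIndependent.pair_iff.2 fun a b h => ⟨?_, ?_⟩
  · simpa using congrFun h 0
  · simpa using congrFun h 4

theorem span_basicRelations :
    Submodule.span R (Set.range (basicRelations R)) = cubicTraceRelations R := by
  refine le_antisymm (Submodule.span_le.2 (Set.range_subset_iff.2 basicRelations_mem))
    fun y hy => ?_
  rw [eq_smul_basicRelations hy]
  have basic_mem (i : Fin 2) :
      basicRelations R i ∈ Submodule.span R (Set.range (basicRelations R)) :=
    Submodule.subset_span (Set.mem_range_self i)
  exact add_mem (Submodule.smul_mem _ _ (basic_mem 0)) (Submodule.smul_mem _ _ (basic_mem 1))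

variable (R) in
theorem finrank_relSpace_general [Nontrivial R] :
    Module.finrank R (cubicTraceRelations R) = 2 := by
  rw [← span_basicRelations, finrank_span_eq_card linearIndependent_basicRelations,
    Fintype.card_fin]

end CubicTraces

theorem relSpace_eq_cubicTraceRelations : relSpace = cubicTraceRelations ℂ :=
  Submodule.ext fun y => by
    simp only [mem_cubicTraceRelations, cubicTraces_dotProduct]
    rfl

/-- The space of relations among the five degree-3 spanning invariants of the `O₂`
conjugation action has dimension 2. -/
theorem finrank_relSpace : Module.finrank ℂ relSpace = 2 := by
  rw [relSpace_eq_cubicTraceRelations, finrank_relSpace_general]
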